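/- arXiv:1708.09351 — 7 statements merged into one kernel-verified Lean document; each statement's English description precedes it below -/
import Mathlib

section
/- Consider a finite directed graph (N,E) whose underlying undirected graph is connected, and for each bus j ∈ N a function f_j : ℝ^{n_j} × ℝ → ℝ^{n_j}. Suppose a point (η*, ω*, x^{s,*}) with η* : E → ℝ, ω* : N → ℝ, x^{s,*}_j ∈ ℝ^{n_j} satisfies the equilibrium conditions: ω*_i − ω*_j = 0 for every edge (i,j) ∈ E, and f_j(x^{s,*}_j, −ω*_j) = 0 for every j ∈ N; and suppose there exists a bus j̄ ∈ N such that for all x̄ ∈ ℝ^{n_{j̄}} and ω̄ ∈ ℝ, f_{j̄}(x̄, −ω̄) = 0 implies ω̄ = 0. Then ω*_j = 0 for every j ∈ N. Moreover, for any load parameters d̲_j ≤ 0 ≤ d̄_j and 𝜔̲_j < 0 < ω̄_j, the Filippov regularization of the on-off load map satisfies F_j(ω*_j) = {0}; in particular the equilibrium controllable demand is zero at every bus. -/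
/-- The on-off controllable load map:
`f^c(ω) = d̄` if `ω > ω̄`, `0` if `𝜔̲ < ω ≤ ω̄`, `d̲` if `ω ≤ 𝜔̲`. -/
noncomputable def onOffLoad (dlo dhi wlo whi ω : ℝ) : ℝ :=
  if whi < ω then dhi else if ω ≤ wlo then dlo else 0

/-- The Filippov regularization of the on-off load map:
`F(ω) = [0, d̄]` if `ω = ω̄`, `F(ω) = [d̲, 0]` if `ω = 𝜔̲`, `F(ω) = {f^c(ω)}` otherwise. -/
noncomputable def filippov (dlo dhi wlo whi ω : ℝ) : Set ℝ :=
  if ω = whi then Set.Icc 0 dhi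
  else if ω = wlo then Set.Icc dlo 0
  else {onOffLoad dlo dhi wlo whi ω}

/-- Characterization of equilibria of the power network with on-off loads:
the equilibrium frequency deviation is zero at every bus, and the Filippov
regularization of the on-off load map is the singleton `{0}` at the equilibrium frequency. -/
theorem stmt_0 {N : Type*} [Fintype N] (E : Set (N × N))
    (hconn : (SimpleGraph.fromRel (fun i j => (i, j) ∈ E)).Connected)
    (n : N → ℕ)
    (f : ∀ j : N, (Fin (n j) → ℝ) → ℝ → (Fin (n j) → ℝ))
    (ηstar : {e : N × N // e ∈ E} → ℝ) (ωstar : N → ℝ)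
    (xstar : ∀ j : N, Fin (n j) → ℝ)
    (heq1 : ∀ i j : N, (i, j) ∈ E → ωstar i - ωstar j = 0)
    (heq2 : ∀ j : N, f j (xstar j) (-ωstar j) = 0)
    (hbar : ∃ jbar : N, ∀ (xb : Fin (n jbar) → ℝ) (wb : ℝ),
      f jbar xb (-wb) = 0 → wb = 0) :
    (∀ j : N, ωstar j = 0) ∧
    ∀ dlo dhi wlo whi : N → ℝ,
      (∀ j, dlo j ≤ 0) → (∀ j, 0 ≤ dhi j) → (∀ j, wlo j < 0) → (∀ j, 0 < whi j) →
      ∀ j : N, filippov (dlo j) (dhi j) (wlo j) (whi j) (ωstar j) = {0} := by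
  have key : ∀ i j : N, ωstar i = ωstar j := by
    intro i j
    obtain ⟨p⟩ := hconn.preconnected i j
    induction p with
    | nil => rfl
    | cons h _ ih =>
      rw [SimpleGraph.fromRel_adj] at h
      rcases h.2 with h | h
      · have := heq1 _ _ h
        linarith
      · have := heq1 _ _ h
        linarith
  obtain ⟨jbar, hj⟩ := hbar
  have hz : ∀ j : N, ωstar j = 0 := fun j =>
    (key j jbar).trans (hj _ _ (heq2 jbar))
  refine ⟨hz, ?_⟩
  intro dlo dhi wlo whi _ _ hwlo hwhi j
  rw [hz j]
  unfold filippov onOffLoad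
  rw [if_neg (hwhi j).ne, if_neg (hwlo j).ne', if_neg (hwhi j).not_gt, if_neg (hwlo j).not_ge]
end

section
/- Consider a finite directed graph (N,E) whose underlying undirected graph is connected, for each bus j ∈ N a function f_j : ℝ^{n_j} × ℝ → ℝ^{n_j}, and hysteresis thresholds 0 < ω⁰_j < ω¹_j. Suppose a point (η*, ω*, x^{s,*}, σ*) satisfies: ω*_i − ω*_j = 0 for every edge (i,j) ∈ E; f_j(x^{s,*}_j, −ω*_j) = 0 for every j ∈ N; σ*_j ∈ I_j(ω*_j) for every j ∈ N; and there exists a bus j̄ ∈ N such that for all x̄ ∈ ℝ^{n_{j̄}} and ω̄ ∈ ℝ, f_{j̄}(x̄, −ω̄) = 0 implies ω̄ = 0. Then ω*_j = 0 and σ*_j = 0 for every j ∈ N. -/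
/-- `sgn(ω) = 1` for `ω ≥ 0` and `sgn(ω) = −1` for `ω < 0`. -/
noncomputable def hsgn (ω : ℝ) : ℝ := if 0 ≤ ω then 1 else -1

/-- The hysteresis consistency map with thresholds `0 < ω⁰ < ω¹`:
`I(ω) = {sgn ω}` if `|ω| > ω¹`, `I(ω) = {0}` if `|ω| < ω⁰`,
and `I(ω) = {0, sgn ω}` if `ω⁰ ≤ |ω| ≤ ω¹`. -/
noncomputable def hystI (w0 w1 ω : ℝ) : Set ℝ :=
  if w1 < |ω| then {hsgn ω}
  else if |ω| < w0 then {0}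
  else {0, hsgn ω}

/-- Characterization of equilibria of the hybrid power network system with hysteretic
on-off loads: the equilibrium frequency deviations and switching states are zero. -/
theorem stmt_1 {N : Type*} [Fintype N] (E : Set (N × N))
    (hconn : (SimpleGraph.fromRel (fun i j => (i, j) ∈ E)).Connected)
    (n : N → ℕ)
    (f : ∀ j : N, (Fin (n j) → ℝ) → ℝ → (Fin (n j) → ℝ))
    (w0 w1 : N → ℝ) (hw0 : ∀ j, 0 < w0 j) (hw01 : ∀ j, w0 j < w1 j)
    (ηstar : {e : N × N // e ∈ E} → ℝ) (ωstar : N → ℝ)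
    (xstar : ∀ j : N, Fin (n j) → ℝ) (σstar : N → ℝ)
    (heq1 : ∀ i j : N, (i, j) ∈ E → ωstar i - ωstar j = 0)
    (heq2 : ∀ j : N, f j (xstar j) (-ωstar j) = 0)
    (hσ : ∀ j : N, σstar j ∈ hystI (w0 j) (w1 j) (ωstar j))
    (hbar : ∃ jbar : N, ∀ (xb : Fin (n jbar) → ℝ) (wb : ℝ),
      f jbar xb (-wb) = 0 → wb = 0) :
    ∀ j : N, ωstar j = 0 ∧ σstar j = 0 := by
  obtain ⟨b, hb⟩ := hbar
  have hb0 : ωstar b = 0 := hb _ _ (heq2 b)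
  have key : ∀ u v : N,
      (SimpleGraph.fromRel (fun i j => (i, j) ∈ E)).Walk u v → ωstar u = ωstar v := by
    intro u v p
    induction p with
    | nil => rfl
    | cons h _ ih =>
      rw [← ih]
      rw [SimpleGraph.fromRel_adj] at h
      rcases h.2 with h | h
      · linarith [heq1 _ _ h]
      · linarith [heq1 _ _ h]
  intro j
  obtain ⟨p⟩ := hconn.preconnected j b
  have hj : ωstar j = 0 := (key j b p).trans hb0
  refine ⟨hj, ?_⟩
  have h := hσ j
  have h1 : ¬ w1 j < 0 := by linarith [hw0 j, hw01 j]
  rw [hj, hystI, abs_zero, if_neg h1, if_pos (hw0 j)] at h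
  exact h
end

section
/- Let (N,E) be a finite directed graph with E ⊆ N × N, let B_{ij} > 0 for (i,j) ∈ E, and let real parameters p^L_j, s*_j (j ∈ N) and η*_{ij} ((i,j) ∈ E) satisfy the equilibrium power balance −p^L_j + s*_j − Σ_{k:(j,k)∈E} B_{jk} sin η*_{jk} + Σ_{i:(i,j)∈E} B_{ij} sin η*_{ij} = 0 for every j ∈ N. Let ω_j, s_j (j ∈ N), η_{ij} ((i,j) ∈ E), and numbers a_j, φ_j with φ_j ≥ 0 and a_j ≤ −ω_j (s_j − s*_j) − φ_j for each j ∈ N, and for each j let v_j ∈ F_j(ω_j), where F_j is the Filippov regularization of the on-off load map with parameters d̲_j ≤ 0 ≤ d̄_j and 𝜔̲_j < 0 < ω̄_j. Then Σ_{j∈N} ω_j (−p^L_j + s_j − v_j − Σ_{k:(j,k)∈E} B_{jk} sin η_{jk} + Σ_{i:(i,j)∈E} B_{ij} sin η_{ij}) + Σ_{(i,j)∈E} B_{ij} (sin η_{ij} − sin η*_{ij})(ω_i − ω_j) + Σ_{j∈N} a_j ≤ −Σ_{j∈N} φ_j ≤ 0. -/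
lemma filippov_mul_nonneg {dlo dhi wlo whi ω v : ℝ} (h1 : dlo ≤ 0) (h2 : 0 ≤ dhi)
    (h3 : wlo < 0) (h4 : 0 < whi) (hv : v ∈ filippov dlo dhi wlo whi ω) : 0 ≤ ω * v := by
  unfold filippov onOffLoad at hv
  split_ifs at hv with c1 c2 c3 c4
  · exact mul_nonneg (by linarith) hv.1
  · exact mul_nonneg_of_nonpos_of_nonpos (by linarith) hv.2
  · rw [Set.mem_singleton_iff.1 hv]; exact mul_nonneg (by linarith) h2
  · rw [Set.mem_singleton_iff.1 hv]; exact mul_nonneg_of_nonpos_of_nonpos (by linarith) h1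
  · rw [Set.mem_singleton_iff.1 hv]; simp

lemma sum_mul_fiber {N : Type*} [Fintype N] [DecidableEq N] (E : Finset (N × N))
    (g : N × N → N) (ω : N → ℝ) (f : N × N → ℝ) :
    ∑ j : N, ω j * ∑ e ∈ E.filter (fun e => g e = j), f e = ∑ e ∈ E, ω (g e) * f e := by
  rw [← Finset.sum_fiberwise E g]
  refine Finset.sum_congr rfl fun j _ => ?_
  rw [Finset.mul_sum]
  refine Finset.sum_congr rfl fun e he => ?_
  rw [(Finset.mem_filter.1 he).2]

/-- The key dissipation inequality `max V̇ ≤ −Σ_j φ_j(−ω_j) ≤ 0` in the proof of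
Theorem 1 of the paper, for the power network with on-off loads. -/
theorem stmt_3 {N : Type*} [Fintype N] [DecidableEq N] (E : Finset (N × N))
    (B ηstar η : N × N → ℝ) (pL sstar ω s a φ v : N → ℝ)
    (dlo dhi wlo whi : N → ℝ)
    (hB : ∀ e ∈ E, 0 < B e)
    (hbal : ∀ j : N, -pL j + sstar j
      - (∑ e ∈ E.filter (fun e => e.1 = j), B e * Real.sin (ηstar e))
      + (∑ e ∈ E.filter (fun e => e.2 = j), B e * Real.sin (ηstar e)) = 0)
    (hφ : ∀ j : N, 0 ≤ φ j)
    (ha : ∀ j : N, a j ≤ -ω j * (s j - sstar j) - φ j)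
    (hdlo : ∀ j, dlo j ≤ 0) (hdhi : ∀ j, 0 ≤ dhi j)
    (hwlo : ∀ j, wlo j < 0) (hwhi : ∀ j, 0 < whi j)
    (hv : ∀ j : N, v j ∈ filippov (dlo j) (dhi j) (wlo j) (whi j) (ω j)) :
    (∑ j : N, ω j * (-pL j + s j - v j
      - (∑ e ∈ E.filter (fun e => e.1 = j), B e * Real.sin (η e))
      + (∑ e ∈ E.filter (fun e => e.2 = j), B e * Real.sin (η e))))
    + (∑ e ∈ E, B e * (Real.sin (η e) - Real.sin (ηstar e)) * (ω e.1 - ω e.2))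
    + (∑ j : N, a j) ≤ -∑ j : N, φ j ∧ -∑ j : N, φ j ≤ 0 := by
  refine ⟨?_, neg_nonpos.2 (Finset.sum_nonneg fun j _ => hφ j)⟩
  have k1 := sum_mul_fiber E Prod.fst ω (fun e => B e * Real.sin (η e))
  have k2 := sum_mul_fiber E Prod.snd ω (fun e => B e * Real.sin (η e))
  have k3 := sum_mul_fiber E Prod.fst ω (fun e => B e * Real.sin (ηstar e))
  have k4 := sum_mul_fiber E Prod.snd ω (fun e => B e * Real.sin (ηstar e))
  have hE : ∑ e ∈ E, B e * (Real.sin (η e) - Real.sin (ηstar e)) * (ω e.1 - ω e.2)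
      = ∑ e ∈ E, ω e.1 * (B e * Real.sin (η e)) - ∑ e ∈ E, ω e.2 * (B e * Real.sin (η e))
        - ∑ e ∈ E, ω e.1 * (B e * Real.sin (ηstar e))
        + ∑ e ∈ E, ω e.2 * (B e * Real.sin (ηstar e)) := by
    rw [← Finset.sum_sub_distrib, ← Finset.sum_sub_distrib, ← Finset.sum_add_distrib]
    exact Finset.sum_congr rfl fun e _ => by ring
  rw [hE, ← k1, ← k2, ← k3, ← k4, ← Finset.sum_sub_distrib, ← Finset.sum_sub_distrib,
    ← Finset.sum_add_distrib, ← Finset.sum_add_distrib, ← Finset.sum_add_distrib,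
    ← Finset.sum_neg_distrib]
  refine Finset.sum_le_sum fun j _ => ?_
  have h1 := filippov_mul_nonneg (hdlo j) (hdhi j) (hwlo j) (hwhi j) (hv j)
  have h2 := congrArg (fun x => ω j * x) (hbal j)
  have h3 := ha j
  simp only [mul_zero] at h2
  linarith
end

section
/- Let (N,E) be a finite directed graph with E ⊆ N × N, let B_{ij} > 0 for (i,j) ∈ E, and let real parameters p^L_j, s*_j (j ∈ N) and η*_{ij} ((i,j) ∈ E) satisfy the equilibrium power balance −p^L_j + s*_j − Σ_{k:(j,k)∈E} B_{jk} sin η*_{jk} + Σ_{i:(i,j)∈E} B_{ij} sin η*_{ij} = 0 for every j ∈ N. For each bus j let 0 < ω⁰_j < ω¹_j, d̄_j ≥ 0, and let ω_j, s_j (j ∈ N), η_{ij} ((i,j) ∈ E), numbers a_j, φ_j with φ_j ≥ 0 and a_j ≤ −ω_j (s_j − s*_j) − φ_j, and σ_j ∈ I_j(ω_j). Then Σ_{j∈N} ω_j (−p^L_j + s_j − d̄_j σ_j − Σ_{k:(j,k)∈E} B_{jk} sin η_{jk} + Σ_{i:(i,j)∈E} B_{ij} sin η_{ij}) + Σ_{(i,j)∈E}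 B_{ij} (sin η_{ij} − sin η*_{ij})(ω_i − ω_j) + Σ_{j∈N} a_j ≤ −Σ_{j∈N} φ_j ≤ 0. -/
/-- The key flow dissipation inequality `V̇ ≤ −Σ_j φ_j(−ω_j) ≤ 0` on the flow set in the
proof of Theorem 2 of the paper, for the power network with hysteretic on-off loads
`d^c_j = d̄_j σ_j`. -/
theorem stmt_4 {N : Type*} [Fintype N] [DecidableEq N] (E : Finset (N × N))
    (B ηstar η : N × N → ℝ) (pL sstar ω s a φ σ : N → ℝ)
    (w0 w1 dhi : N → ℝ)
    (hB : ∀ e ∈ E, 0 < B e)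
    (hbal : ∀ j : N, -pL j + sstar j
      - (∑ e ∈ E.filter (fun e => e.1 = j), B e * Real.sin (ηstar e))
      + (∑ e ∈ E.filter (fun e => e.2 = j), B e * Real.sin (ηstar e)) = 0)
    (hw0 : ∀ j, 0 < w0 j) (hw01 : ∀ j, w0 j < w1 j) (hdhi : ∀ j, 0 ≤ dhi j)
    (hφ : ∀ j : N, 0 ≤ φ j)
    (ha : ∀ j : N, a j ≤ -ω j * (s j - sstar j) - φ j)
    (hσ : ∀ j : N, σ j ∈ hystI (w0 j) (w1 j) (ω j)) :
    (∑ j : N, ω j * (-pL j + s j - dhi j * σ j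
      - (∑ e ∈ E.filter (fun e => e.1 = j), B e * Real.sin (η e))
      + (∑ e ∈ E.filter (fun e => e.2 = j), B e * Real.sin (η e))))
    + (∑ e ∈ E, B e * (Real.sin (η e) - Real.sin (ηstar e)) * (ω e.1 - ω e.2))
    + (∑ j : N, a j) ≤ -∑ j : N, φ j ∧ -∑ j : N, φ j ≤ 0 := by
  have key : ∀ (g : N × N → N) (f : N × N → ℝ),
      ∑ j : N, ω j * (∑ e ∈ E.filter (fun e => g e = j), f e) = ∑ e ∈ E, ω (g e) * f e := by
    intro g f
    rw [← Finset.sum_fiberwise E g (fun e => ω (g e) * f e)]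
    refine Finset.sum_congr rfl fun j _ => ?_
    rw [Finset.mul_sum]
    refine Finset.sum_congr rfl fun e he => ?_
    rw [(Finset.mem_filter.mp he).2]
  have hsig : ∀ j, 0 ≤ ω j * σ j := by
    intro j
    have hs : 0 ≤ ω j * hsgn (ω j) := by
      unfold hsgn
      split_ifs with h <;> linarith
    have h := hσ j
    unfold hystI at h
    split_ifs at h
    · rw [Set.mem_singleton_iff] at h
      rw [h]; exact hs
    · rw [Set.mem_singleton_iff] at h
      simp [h]
    · rcases h with h | h
      · simp [h]
      · rw [Set.mem_singleton_iff] at h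
        rw [h]; exact hs
  refine ⟨?_, neg_nonpos.mpr (Finset.sum_nonneg fun j _ => hφ j)⟩
  have hedge : (∑ e ∈ E, B e * (Real.sin (η e) - Real.sin (ηstar e)) * (ω e.1 - ω e.2))
      = ∑ j : N, (ω j * (∑ e ∈ E.filter (fun e => e.1 = j), B e * Real.sin (η e))
        - ω j * (∑ e ∈ E.filter (fun e => e.1 = j), B e * Real.sin (ηstar e))
        - ω j * (∑ e ∈ E.filter (fun e => e.2 = j), B e * Real.sin (η e))
        + ω j * (∑ e ∈ E.filter (fun e => e.2 = j), B e * Real.sin (ηstar e))) := by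
    rw [Finset.sum_add_distrib, Finset.sum_sub_distrib, Finset.sum_sub_distrib,
      key (fun e => e.1), key (fun e => e.1), key (fun e => e.2), key (fun e => e.2),
      ← Finset.sum_sub_distrib, ← Finset.sum_sub_distrib, ← Finset.sum_add_distrib]
    refine Finset.sum_congr rfl fun e _ => ?_
    ring
  rw [hedge, ← Finset.sum_add_distrib, ← Finset.sum_add_distrib, ← Finset.sum_neg_distrib]
  refine Finset.sum_le_sum fun j _ => ?_
  have h1 := congrArg (fun x => ω j * x) (hbal j)
  have h2 := mul_nonneg (hdhi j) (hsig j)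
  have h3 := ha j
  linarith
end

section
/- Let (N,E) be a finite directed graph, M_j > 0 for j ∈ N, B_{ij} > 0 for (i,j) ∈ E, and suppose the real parameters p^L_j, s*_j, η*_{ij} satisfy −p^L_j + s*_j − Σ_{k:(j,k)∈E} B_{jk} sin η*_{jk} + Σ_{i:(i,j)∈E} B_{ij} sin η*_{ij} = 0 for every j ∈ N. Let η : ℝ → ℝ^E and ω : ℝ → ℝ^N be differentiable functions and s, v : ℝ → ℝ^N arbitrary functions such that for all t: (d/dt)η_{ij}(t) = ω_i(t) − ω_j(t) for all (i,j) ∈ E, and M_j (d/dt)ω_j(t) = −p^L_j + s_j(t) − v_j(t) − Σ_{k:(j,k)∈E} B_{jk} sin η_{jk}(t) + Σ_{i:(i,j)∈E} B_{ij} sin η_{ij}(t) for all j ∈ N. Then for all t, (d/dt) V̄(η(t), ω(t)) = Σ_{j∈N} ω_j(t)(s_j(t) − s*_j) − Σ_{j∈N} ω_j(t) v_j(t), where V̄(η, ω) = (1/2) Σ_{j∈N} M_j ω_j² + Σ_{(i,j)∈E} B_{ij} (cos η*_{ij} − cos η_{ij} − (η_{ij} − η*_{ij}) sin η*_{ij}).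 -/
/-- The Lyapunov function `V̄ = V_F + V_P` of the paper, with kinetic part
`V_F(ω) = (1/2) Σ_j M_j ω_j²` and potential part
`V_P(η) = Σ_{(i,j)∈E} B_{ij} (cos η*_{ij} − cos η_{ij} − (η_{ij} − η*_{ij}) sin η*_{ij})`. -/
noncomputable def Vbar {N : Type*} [Fintype N] (E : Finset (N × N))
    (M : N → ℝ) (B ηstar : N × N → ℝ) (ηf : N × N → ℝ) (ωf : N → ℝ) : ℝ :=
  (1 / 2) * (∑ j : N, M j * (ωf j) ^ 2) +
    ∑ e ∈ E, B e *
      (Real.cos (ηstar e) - Real.cos (ηf e) - (ηf e - ηstar e) * Real.sin (ηstar e))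

/-- Derivative of the Lyapunov function `V̄` along solutions of the swing equations:
`(d/dt) V̄(η(t), ω(t)) = Σ_j ω_j(t)(s_j(t) − s*_j) − Σ_j ω_j(t) v_j(t)`. -/
theorem stmt_11 {N : Type*} [Fintype N] [DecidableEq N] (E : Finset (N × N))
    (M : N → ℝ) (B ηstar : N × N → ℝ) (pL sstar : N → ℝ)
    (η : ℝ → N × N → ℝ) (ω ω' s v : ℝ → N → ℝ)
    (hM : ∀ j : N, 0 < M j) (hB : ∀ e ∈ E, 0 < B e)
    (hbal : ∀ j : N, -pL j + sstar j
      - (∑ e ∈ E.filter (fun e => e.1 = j), B e * Real.sin (ηstar e))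
      + (∑ e ∈ E.filter (fun e => e.2 = j), B e * Real.sin (ηstar e)) = 0)
    (hη : ∀ t : ℝ, ∀ e ∈ E, HasDerivAt (fun τ => η τ e) (ω t e.1 - ω t e.2) t)
    (hω : ∀ (t : ℝ) (j : N), HasDerivAt (fun τ => ω τ j) (ω' t j) t)
    (hswing : ∀ (t : ℝ) (j : N), M j * ω' t j = -pL j + s t j - v t j
      - (∑ e ∈ E.filter (fun e => e.1 = j), B e * Real.sin (η t e))
      + (∑ e ∈ E.filter (fun e => e.2 = j), B e * Real.sin (η t e))) :
    ∀ t : ℝ, HasDerivAt (fun τ => Vbar E M B ηstar (η τ) (ω τ))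
      ((∑ j : N, ω t j * (s t j - sstar j)) - ∑ j : N, ω t j * v t j) t := by
  intro t
  have key : ∀ (g : N × N → N) (f : N × N → ℝ),
      ∑ j : N, ω t j * ∑ e ∈ E.filter (fun e => g e = j), f e
        = ∑ e ∈ E, ω t (g e) * f e := by
    intro g f
    rw [← Finset.sum_fiberwise E g (fun e => ω t (g e) * f e)]
    refine Finset.sum_congr rfl fun j _ => ?_
    rw [Finset.mul_sum]
    refine Finset.sum_congr rfl fun e he => ?_
    rw [(Finset.mem_filter.mp he).2]
  have h1 : HasDerivAt (fun τ => (1 / 2 : ℝ) * ∑ j : N, M j * (ω τ j) ^ 2)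
      ((1 / 2) * ∑ j : N, M j * (2 * ω t j * ω' t j)) t := by
    refine HasDerivAt.const_mul _ (HasDerivAt.fun_sum fun j _ => ?_)
    refine HasDerivAt.const_mul _ ?_
    simpa using (hω t j).fun_pow 2
  have h2 : HasDerivAt (fun τ => ∑ e ∈ E, B e *
      (Real.cos (ηstar e) - Real.cos (η τ e) - (η τ e - ηstar e) * Real.sin (ηstar e)))
      (∑ e ∈ E, B e * ((Real.sin (η t e) - Real.sin (ηstar e)) *
        (ω t e.1 - ω t e.2))) t := by
    refine HasDerivAt.fun_sum fun e he => ?_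
    refine HasDerivAt.const_mul _ ?_
    have h := hη t e he
    refine ((h.cos.const_sub (Real.cos (ηstar e))).sub
      ((h.sub_const (ηstar e)).mul_const (Real.sin (ηstar e)))).congr_deriv ?_
    ring
  refine (h1.add h2).congr_deriv ?_
  have h3 : (1 / 2) * ∑ j : N, M j * (2 * ω t j * ω' t j)
      = (∑ j : N, ω t j * (s t j - sstar j)) - (∑ j : N, ω t j * v t j)
        - (∑ j : N, ω t j * ∑ e ∈ E.filter (fun e => e.1 = j), B e * Real.sin (η t e))
        + (∑ j : N, ω t j * ∑ e ∈ E.filter (fun e => e.2 = j), B e * Real.sin (η t e))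
        + (∑ j : N, ω t j * ∑ e ∈ E.filter (fun e => e.1 = j), B e * Real.sin (ηstar e))
        - (∑ j : N, ω t j * ∑ e ∈ E.filter (fun e => e.2 = j), B e * Real.sin (ηstar e)) := by
    rw [Finset.mul_sum]
    simp only [← Finset.sum_sub_distrib, ← Finset.sum_add_distrib]
    refine Finset.sum_congr rfl fun j _ => ?_
    linear_combination ω t j * hswing t j + ω t j * hbal j
  have h4 : ∑ e ∈ E, B e * ((Real.sin (η t e) - Real.sin (ηstar e)) * (ω t e.1 - ω t e.2))
      = (∑ e ∈ E, ω t e.1 * (B e * Real.sin (η t e)))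
        - (∑ e ∈ E, ω t e.2 * (B e * Real.sin (η t e)))
        - (∑ e ∈ E, ω t e.1 * (B e * Real.sin (ηstar e)))
        + (∑ e ∈ E, ω t e.2 * (B e * Real.sin (ηstar e))) := by
    simp only [← Finset.sum_sub_distrib, ← Finset.sum_add_distrib]
    refine Finset.sum_congr rfl fun e _ => ?_
    ring
  rw [h3, h4, key (fun e => e.1), key (fun e => e.2), key (fun e => e.1), key (fun e => e.2)]
  ring
end

section
/- Let K, K̃, τ, D be positive reals with Kτ < D + K̃. Then for every real ω ≠ 0, the real part of the transfer function value S(iω) = (K̃ + K/(iω)) / (1 + iωτ) + D satisfies Re S(iω) = D + (K̃ − Kτ)/(1 + τ²ω²), and consequently Re S(iω) ≥ min(D, D + K̃ − Kτ) > 0. -/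
/-- Positive-realness on the imaginary axis of the transfer function
`S(s) = (K̃ + K/s)/(1 + τs) + D` of the power supply dynamics (14) of the paper,
under the gain condition `Kτ < D + K̃`: for every real `ω ≠ 0`,
`Re S(iω) = D + (K̃ − Kτ)/(1 + τ²ω²) ≥ min(D, D + K̃ − Kτ) > 0`. -/
theorem stmt_12 (K Kt τ D : ℝ) (hK : 0 < K) (hKt : 0 < Kt) (hτ : 0 < τ) (hD : 0 < D)
    (hcond : K * τ < D + Kt) (ω : ℝ) (hω : ω ≠ 0) :
    ∀ S : ℂ,
      S = ((Kt : ℂ) + (K : ℂ) / (Complex.I * (ω : ℂ))) / (1 + Complex.I * (ω : ℂ) * (τ : ℂ))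
          + (D : ℂ) →
      S.re = D + (Kt - K * τ) / (1 + τ ^ 2 * ω ^ 2) ∧
      min D (D + Kt - K * τ) ≤ S.re ∧
      0 < min D (D + Kt - K * τ) := by
  intro S hS
  have hpos : 0 < 1 + τ ^ 2 * ω ^ 2 := by positivity
  have hre : S.re = D + (Kt - K * τ) / (1 + τ ^ 2 * ω ^ 2) := by
    have hpos' : 1 + ω * τ * (ω * τ) ≠ 0 := by
      have h : 1 + ω * τ * (ω * τ) = 1 + τ ^ 2 * ω ^ 2 := by ring
      rw [h]; exact hpos.ne'
    rw [hS]
    simp [Complex.div_re, Complex.div_im, Complex.normSq_apply]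
    have h : 1 + ω * τ * (ω * τ) = 1 + τ ^ 2 * ω ^ 2 := by ring
    rw [h]
    have := hpos.ne'
    field_simp
    ring
  refine ⟨hre, ?_, lt_min hD (by linarith)⟩
  rw [hre]
  rcases le_total 0 (Kt - K * τ) with h | h
  · refine (min_le_left _ _).trans ?_
    have := div_nonneg h hpos.le
    linarith
  · refine (min_le_right _ _).trans ?_
    have : Kt - K * τ ≤ (Kt - K * τ) / (1 + τ ^ 2 * ω ^ 2) := by
      rw [le_div_iff₀ hpos]
      nlinarith [mul_nonneg (sub_nonneg.2 h) (by positivity : 0 ≤ τ ^ 2 * ω ^ 2)]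
    linarith
end

section
/- Let K, τ_β, τ_γ, D be positive reals with K(τ_β + τ_γ) < D. Then for every real ω ≠ 0, the real part of S(iω) = K / (iω (1 + iωτ_β)(1 + iωτ_γ)) + D satisfies Re S(iω) = D − K(τ_β + τ_γ) / ((1 − ω²τ_βτ_γ)² + ω²(τ_β + τ_γ)²), and since (1 − ω²τ_βτ_γ)² + ω²(τ_β + τ_γ)² = 1 + ω²(τ_β² + τ_γ²) + ω⁴τ_β²τ_γ² ≥ 1, it holds that Re S(iω) ≥ D − K(τ_β + τ_γ) > 0. -/
/-- Positive-realness on the imaginary axis of the transfer function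
`S(s) = (K/s)·1/((1 + τ_β s)(1 + τ_γ s)) + D` of the second-order power supply
dynamics (15) of the paper, under the gain condition `K(τ_β + τ_γ) < D`: for every
real `ω ≠ 0`,
`Re S(iω) = D − K(τ_β + τ_γ)/((1 − ω²τ_βτ_γ)² + ω²(τ_β + τ_γ)²) ≥ D − K(τ_β + τ_γ) > 0`,
using `(1 − ω²τ_βτ_γ)² + ω²(τ_β + τ_γ)² = 1 + ω²(τ_β² + τ_γ²) + ω⁴τ_β²τ_γ² ≥ 1`. -/
theorem stmt_13 (K τβ τγ D : ℝ) (hK : 0 < K) (hτβ : 0 < τβ) (hτγ : 0 < τγ) (hD : 0 < D)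
    (hcond : K * (τβ + τγ) < D) (ω : ℝ) (hω : ω ≠ 0) :
    ∀ S : ℂ,
      S = (K : ℂ) / (Complex.I * (ω : ℂ) * (1 + Complex.I * (ω : ℂ) * (τβ : ℂ))
            * (1 + Complex.I * (ω : ℂ) * (τγ : ℂ))) + (D : ℂ) →
      S.re = D - K * (τβ + τγ) / ((1 - ω ^ 2 * τβ * τγ) ^ 2 + ω ^ 2 * (τβ + τγ) ^ 2) ∧
      (1 - ω ^ 2 * τβ * τγ) ^ 2 + ω ^ 2 * (τβ + τγ) ^ 2
        = 1 + ω ^ 2 * (τβ ^ 2 + τγ ^ 2) + ω ^ 4 * τβ ^ 2 * τγ ^ 2 ∧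
      1 ≤ (1 - ω ^ 2 * τβ * τγ) ^ 2 + ω ^ 2 * (τβ + τγ) ^ 2 ∧
      D - K * (τβ + τγ) ≤ S.re ∧
      0 < D - K * (τβ + τγ) := by
  intro S hS
  have hid : (1 - ω ^ 2 * τβ * τγ) ^ 2 + ω ^ 2 * (τβ + τγ) ^ 2
        = 1 + ω ^ 2 * (τβ ^ 2 + τγ ^ 2) + ω ^ 4 * τβ ^ 2 * τγ ^ 2 := by ring
  have h1 : 1 ≤ (1 - ω ^ 2 * τβ * τγ) ^ 2 + ω ^ 2 * (τβ + τγ) ^ 2 := by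
    rw [hid]
    have : 0 ≤ ω ^ 2 * (τβ ^ 2 + τγ ^ 2) := by positivity
    have : 0 ≤ ω ^ 4 * τβ ^ 2 * τγ ^ 2 := by positivity
    linarith
  have hre : S.re
      = D - K * (τβ + τγ) / ((1 - ω ^ 2 * τβ * τγ) ^ 2 + ω ^ 2 * (τβ + τγ) ^ 2) := by
    have hden : Complex.I * (ω : ℂ) * (1 + Complex.I * (ω : ℂ) * (τβ : ℂ))
            * (1 + Complex.I * (ω : ℂ) * (τγ : ℂ))
          = ⟨-(ω ^ 2 * (τβ + τγ)), ω * (1 - ω ^ 2 * τβ * τγ)⟩ := by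
      apply Complex.ext <;> simp <;> ring
    have hn : (-(ω ^ 2 * (τβ + τγ))) * (-(ω ^ 2 * (τβ + τγ)))
          + ω * (1 - ω ^ 2 * τβ * τγ) * (ω * (1 - ω ^ 2 * τβ * τγ))
        = ω ^ 2 * ((1 - ω ^ 2 * τβ * τγ) ^ 2 + ω ^ 2 * (τβ + τγ) ^ 2) := by ring
    rw [hS, hden, Complex.add_re, Complex.div_re, Complex.normSq_mk, hn]
    simp only [Complex.ofReal_re, Complex.ofReal_im]
    generalize (1 - ω ^ 2 * τβ * τγ) ^ 2 + ω ^ 2 * (τβ + τγ) ^ 2 = N at h1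
    have hN : N ≠ 0 := by linarith
    field_simp
    ring
  refine ⟨hre, hid, h1, ?_, by linarith⟩
  rw [hre]
  have : K * (τβ + τγ) / ((1 - ω ^ 2 * τβ * τγ) ^ 2 + ω ^ 2 * (τβ + τγ) ^ 2)
      ≤ K * (τβ + τγ) := div_le_self (by positivity) h1
  linarith
end
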